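/- Assume S is infinite and let 𝒦 be a simplicial complex over S all of whose faces have cardinality at most n+1 for some n ≥ 0. Then d(𝒦, 𝒫*_f(S)) = 1, where 𝒫*_f(S) is the simplicial complex of all nonempty finite subsets of S. Consequently, the union of the finite-dimensional complexes is not dense in the space of all simplicial complexes over S. -/

import Mathlib

open scoped BigOperators

/-- A simplicial complex over the vertex set `S`: a nonempty collection of
nonempty finite subsets of `S`, closed under taking nonempty subsets. -/
def IsSimplicialComplex {S : Type*} (K : Set (Finset S)) : Prop :=
  K.Nonempty ∧ (∀ F ∈ K, F.Nonempty) ∧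
    ∀ F ∈ K, ∀ G : Finset S, G.Nonempty → G ⊆ F → G ∈ K

/-- Halved ℓ¹ distance between finitely supported real functions:
`d(α,β) = (1/2) ∑ₛ |α s - β s|`. -/
noncomputable def l1dist {S : Type*} (α β : S →₀ ℝ) : ℝ :=
  (1 / 2) * (α - β).sum fun _ x => |x|

/-- The ℓ¹ geometric realization of a collection `K` of finite subsets of `S`:
finitely supported probability vectors whose support is a face of `K`. -/
def realization {S : Type*} (K : Set (Finset S)) : Set (S →₀ ℝ) :=
  {α | (∀ s, 0 ≤ α s) ∧ (α.sum fun _ x => x) = 1 ∧ α.support ∈ K}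

/-- Distance from a point to a set of finitely supported functions. -/
noncomputable def distToSet {S : Type*} (α : S →₀ ℝ) (X : Set (S →₀ ℝ)) : ℝ :=
  sInf (l1dist α '' X)

/-- One-sided Hausdorff distance between (the realizations of) two complexes. -/
noncomputable def hdelta {S : Type*} (K₁ K₂ : Set (Finset S)) : ℝ :=
  sSup ((fun α => distToSet α (realization K₂)) '' realization K₁)

/-- Hausdorff distance between (the realizations of) two simplicial complexes. -/
noncomputable def hdist {S : Type*} (K₁ K₂ : Set (Finset S)) : ℝ :=
  max (hdelta K₁ K₂) (hdelta K₂ K₁)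

/-- `d(F, K)`: supremum of distances to `|K|₁` over probability vectors
supported exactly on `F`. -/
noncomputable def dFace {S : Type*} (F : Finset S) (K : Set (Finset S)) : ℝ :=
  sSup ((fun α => distToSet α (realization K)) ''
    {α : S →₀ ℝ | (∀ s, 0 ≤ α s) ∧ (α.sum fun _ x => x) = 1 ∧ α.support = F})

/-- The `n`-skeleton of a simplicial complex. -/
def skeleton {S : Type*} (n : ℕ) (K : Set (Finset S)) : Set (Finset S) :=
  {F | F ∈ K ∧ F.card ≤ n + 1}


open Classical in
theorem l1dist_eq_sum {S : Type*} (α β : S →₀ ℝ) :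
    l1dist α β = (1 / 2) * ∑ s ∈ α.support ∪ β.support, |α s - β s| := by
  unfold l1dist
  congr 1
  rw [Finsupp.sum_of_support_subset (s := α.support ∪ β.support)]
  · simp
  · intro s hs
    by_contra h
    simp at h hs
    exact hs (by rw [h.1, h.2]; simp)
  · simp

open Classical in
theorem sum_union_left {S : Type*} (α β : S →₀ ℝ) :
    ∑ s ∈ α.support ∪ β.support, α s = α.sum fun _ x => x := by
  rw [Finsupp.sum_of_support_subset (s := α.support ∪ β.support)]
  · exact Finset.subset_union_left
  · simp

open Classical in
theorem sum_union_right {S : Type*} (α β : S →₀ ℝ) :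
    ∑ s ∈ α.support ∪ β.support, β s = β.sum fun _ x => x := by
  rw [Finset.union_comm, sum_union_left]

theorem l1dist_nonneg {S : Type*} (α β : S →₀ ℝ) : 0 ≤ l1dist α β := by
  classical
  rw [l1dist_eq_sum]
  have := Finset.sum_nonneg (s := α.support ∪ β.support)
    (fun s _ => abs_nonneg (α s - β s))
  positivity

theorem l1dist_le_one {S : Type*} {K L : Set (Finset S)} {α β : S →₀ ℝ}
    (hα : α ∈ realization K) (hβ : β ∈ realization L) : l1dist α β ≤ 1 := by
  classical
  rw [l1dist_eq_sum]
  have h : ∑ s ∈ α.support ∪ β.support, |α s - β s| ≤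
      ∑ s ∈ α.support ∪ β.support, (α s + β s) := by
    refine Finset.sum_le_sum fun s _ => ?_
    have := hα.1 s
    have := hβ.1 s
    rw [abs_le]; constructor <;> linarith
  rw [Finset.sum_add_distrib, sum_union_left, sum_union_right, hα.2.1, hβ.2.1] at h
  linarith

theorem realization_nonempty {S : Type*} {K : Set (Finset S)}
    (hK : IsSimplicialComplex K) : (realization K).Nonempty := by
  obtain ⟨⟨F, hF⟩, h1, h2⟩ := hK
  obtain ⟨v, hv⟩ := h1 F hF
  refine ⟨Finsupp.single v 1, ?_, ?_, ?_⟩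
  · intro s
    classical
    rw [Finsupp.single_apply]
    split_ifs <;> norm_num
  · simp
  · rw [Finsupp.support_single_ne_zero _ one_ne_zero]
    exact h2 F hF _ (by simp) (by simpa using hv)

theorem distToSet_le_one {S : Type*} {K L : Set (Finset S)} {α : S →₀ ℝ}
    (hα : α ∈ realization K) (hL : (realization L).Nonempty) :
    distToSet α (realization L) ≤ 1 := by
  obtain ⟨β, hβ⟩ := hL
  have hb : BddBelow (l1dist α '' realization L) := by
    refine ⟨0, ?_⟩
    rintro _ ⟨γ, _, rfl⟩
    exact l1dist_nonneg _ _
  exact (csInf_le hb (Set.mem_image_of_mem _ hβ)).trans (l1dist_le_one hα hβ)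

theorem hdelta_le_one {S : Type*} {K L : Set (Finset S)}
    (hL : (realization L).Nonempty) : hdelta K L ≤ 1 := by
  refine Real.sSup_le ?_ zero_le_one
  rintro _ ⟨α, hα, rfl⟩
  exact distToSet_le_one hα hL

theorem le_l1dist {S : Type*} {K L : Set (Finset S)} {α β : S →₀ ℝ} {c : ℝ} {m : ℕ}
    (hα : α ∈ realization K) (hβ : β ∈ realization L) (hc : ∀ s, α s ≤ c)
    (hm : β.support.card ≤ m) (hc0 : 0 ≤ c) : 1 - m * c ≤ l1dist α β := by
  classical
  rw [l1dist_eq_sum]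
  have h : ∑ s ∈ α.support ∪ β.support, (α s + β s - 2 * (if s ∈ β.support then c else 0)) ≤
      ∑ s ∈ α.support ∪ β.support, |α s - β s| := by
    refine Finset.sum_le_sum fun s _ => ?_
    have h1 := hα.1 s
    have h2 := hc s
    split_ifs with hs
    · have := neg_abs_le (α s - β s)
      linarith
    · have : β s = 0 := by simpa using hs
      rw [this]
      have := le_abs_self (α s - 0)
      linarith
  rw [Finset.sum_sub_distrib, Finset.sum_add_distrib, sum_union_left, sum_union_right,
    hα.2.1, hβ.2.1, ← Finset.mul_sum, Finset.sum_ite_mem,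
    Finset.inter_eq_right.2 Finset.subset_union_right, Finset.sum_const, nsmul_eq_mul] at h
  have h3 : (β.support.card : ℝ) * c ≤ m * c := by gcongr
  linarith

theorem exists_uniform {S : Type*} [Infinite S] (N : ℕ) :
    ∃ α ∈ realization {F : Finset S | F.Nonempty}, ∀ s, α s ≤ 1 / ((N : ℝ) + 1) := by
  classical
  obtain ⟨T, hT⟩ := Infinite.exists_subset_card_eq S (N + 1)
  have hp : (0 : ℝ) < (N : ℝ) + 1 := by positivity
  let α : S →₀ ℝ := Finsupp.onFinset T (fun s => if s ∈ T then 1 / ((N : ℝ) + 1) else 0)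
    (by intro s; by_contra! h; simp [h.2] at h)
  have hαs : ∀ s, α s = if s ∈ T then 1 / ((N : ℝ) + 1) else 0 := fun s => rfl
  have hsum : (α.sum fun _ x => x) = 1 := by
    rw [Finsupp.sum_of_support_subset (s := T)]
    · simp only [hαs]
      rw [Finset.sum_ite_mem, Finset.inter_self, Finset.sum_const, hT, nsmul_eq_mul]
      push_cast
      field_simp
    · exact Finsupp.support_onFinset_subset
    · simp
  refine ⟨α, ⟨?_, hsum, ?_⟩, ?_⟩
  · intro s
    rw [hαs]
    split_ifs <;> positivity
  · by_contra h
    have h0 : α.support = ∅ := Finset.not_nonempty_iff_eq_empty.1 h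
    rw [Finsupp.support_eq_empty.1 h0] at hsum
    simp at hsum
  · intro s
    rw [hαs]
    split_ifs
    · exact le_rfl
    · positivity

theorem stmt14 {S : Type*} [Infinite S] (n : ℕ) (K : Set (Finset S))
    (hK : IsSimplicialComplex K) (hd : ∀ F ∈ K, F.card ≤ n + 1) :
    hdist K {F : Finset S | F.Nonempty} = 1 := by
  have hne := realization_nonempty hK
  have hne' : (realization {F : Finset S | F.Nonempty}).Nonempty := by
    obtain ⟨α, hα, _⟩ := exists_uniform (S := S) 0
    exact ⟨α, hα⟩
  refine le_antisymm (max_le (hdelta_le_one hne') (hdelta_le_one hne)) ?_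
  refine le_trans ?_ (le_max_right _ _)
  have key : ∀ N : ℕ, 1 - ((n + 1 : ℕ) : ℝ) * (1 / ((N : ℝ) + 1)) ≤
      hdelta {F : Finset S | F.Nonempty} K := by
    intro N
    obtain ⟨α, hα, hc⟩ := exists_uniform (S := S) N
    have h1 : 1 - ((n + 1 : ℕ) : ℝ) * (1 / ((N : ℝ) + 1)) ≤ distToSet α (realization K) := by
      refine le_csInf (hne.image _) ?_
      rintro _ ⟨β, hβ, rfl⟩
      exact le_l1dist hα hβ hc (hd _ hβ.2.2) (by positivity)
    refine h1.trans (le_csSup ⟨1, ?_⟩ ⟨α, hα, rfl⟩)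
    rintro _ ⟨γ, hγ, rfl⟩
    exact distToSet_le_one hγ hne
  have hl := (tendsto_one_div_add_atTop_nhds_zero_nat (𝕜 := ℝ)).const_mul ((n + 1 : ℕ) : ℝ)
  have hl2 := hl.const_sub 1
  rw [mul_zero, sub_zero] at hl2
  exact le_of_tendsto' hl2 key
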